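/- arXiv:1008.2924 — 2 statements merged into one kernel-verified Lean document; each statement's English description precedes it below -/
import Mathlib

section
/- Let 0 = r_0 < r_1 < ... < r_s = n, S = K[x_1,...,x_n], and P_i = (x_{r_{i-1}+1},...,x_{r_i}) for i = 1,...,s. Set I = P_1 ∩ ... ∩ P_s. Then depth_S(I) = s. -/
open MvPolynomial

/-- The depth of a module `M` with respect to an ideal `I`: the supremum of
lengths of `M`-regular sequences with entries in `I`. -/
noncomputable def moduleDepth (R : Type*) [CommRing R] (I : Ideal R)
    (M : Type*) [AddCommGroup M] [Module R M] : ℕ :=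
  sSup {k | ∃ rs : List R, rs.length = k ∧ (∀ r ∈ rs, r ∈ I) ∧
    RingTheory.Sequence.IsRegular M rs}

/-- The Stanley space `u·K[Z]`: the `K`-span of all monomials `u·v` with
`v` a monomial in the variables of `Z`. -/
noncomputable def stanleySpace {n : ℕ} (K : Type*) [Field K] (d : Fin n →₀ ℕ)
    (Z : Finset (Fin n)) : Submodule K (MvPolynomial (Fin n) K) :=
  Submodule.span K {f | ∃ e : Fin n →₀ ℕ, (∀ i, e i ≠ 0 → i ∈ Z) ∧
    f = monomial (d + e) (1 : K)}

/-- A Stanley decomposition of a monomial ideal `I`: a finite family of Stanley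
spaces `uᵢ·K[Zᵢ]`, with each `uᵢ ∈ I`, which are independent and whose (direct)
sum is `I` as a `K`-vector space. -/
structure StanleyDecomp {n : ℕ} (K : Type*) [Field K]
    (I : Ideal (MvPolynomial (Fin n) K)) where
  m : ℕ
  u : Fin m → (Fin n →₀ ℕ)
  Z : Fin m → Finset (Fin n)
  mem : ∀ i, monomial (u i) (1 : K) ∈ I
  indep : iSupIndep fun i => stanleySpace K (u i) (Z i)
  total : (⨆ i, stanleySpace K (u i) (Z i)) = Submodule.restrictScalars K I

/-- The Stanley depth of a monomial ideal: the largest `k` such that `I` admits a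
Stanley decomposition all of whose Stanley spaces use at least `k` variables. -/
noncomputable def sdepth {n : ℕ} {K : Type*} [Field K]
    (I : Ideal (MvPolynomial (Fin n) K)) : ℕ :=
  sSup {k | ∃ D : StanleyDecomp K I, ∀ i, k ≤ (D.Z i).card}

/-- `I` is a monomial ideal if it is generated by monomials. -/
def IsMonomialIdeal {n : ℕ} {K : Type*} [Field K]
    (I : Ideal (MvPolynomial (Fin n) K)) : Prop :=
  ∃ G : Set (Fin n →₀ ℕ), I = Ideal.span ((fun d => monomial d (1 : K)) '' G)

/-- The monomial prime ideal generated by the variables in `A`. -/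
noncomputable def varIdeal {n : ℕ} (K : Type*) [Field K] (A : Finset (Fin n)) :
    Ideal (MvPolynomial (Fin n) K) :=
  Ideal.span ((fun i => (X i : MvPolynomial (Fin n) K)) '' ↑A)

/-- The graded maximal ideal `(x_1, …, x_n)`. -/
noncomputable def maxIdeal (n : ℕ) (K : Type*) [Field K] :
    Ideal (MvPolynomial (Fin n) K) :=
  varIdeal K Finset.univ

/-!
Choose one variable `x_{c i}` in each block `A i`. Comparing monomials shows, for `T` a set of
blocks, that `(x_{c i} : i ∈ T) I = I ∩ ∑_{i ∈ T} x_{c i} P_i`. The ideal `∑_{i ∈ T} x_{c i} P_i`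
only involves variables of the blocks in `T`, so `x_{c k}` with `k ∉ T` is a nonzerodivisor modulo
it; hence the variables `x_{c i}` form an `I`-regular sequence of length `s`.

This sequence is maximal: `w = ∏ x_{c i}` is killed by every variable modulo `(x_{c i})_i I`,
because for `j` in block `i` the product `x_j ∏_{l ≠ i} x_{c l}` lies in `I`. But `w` has degree
`s`, so it is nonzero there: all of `𝔪 I` sits in degrees at least `s + 1`. By Rees' theorem, a
nonzero element killed by `𝔪` in the quotient by a regular sequence bounds the depth.
-/

section Depth

open CategoryTheory Abelian RingTheory.Sequence

universe u v

variable {R : Type u} [CommRing R]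

lemma subsingleton_linearMap_quotient_of_subsingleton_ext [Small.{v} R] (N : ModuleCat.{v} R)
    (rs : List R) (M : ModuleCat.{v} R) (reg : IsWeaklyRegular M rs)
    (ext_zero : ∀ i ≤ rs.length, Subsingleton (Ext N M i)) :
    Subsingleton (N →ₗ[R] M ⧸ (Ideal.ofList rs • ⊤ : Submodule R M)) := by
  induction rs generalizing M with
  | nil =>
    have : Subsingleton (Ext N M 0) := ext_zero 0 le_rfl
    have : Subsingleton (N →ₗ[R] M) := (Ext.addEquiv₀.trans ModuleCat.homAddEquiv).symm.subsingleton
    let e : (M ⧸ (Ideal.ofList ([] : List R) • ⊤ : Submodule R M)) ≃ₗ[R] M :=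
      Submodule.quotEquivOfEqBot _ (by rw [Ideal.ofList_nil, Submodule.bot_smul])
    exact (LinearEquiv.congrRight (M := N) e).toEquiv.subsingleton
  | cons r rs ih =>
    obtain ⟨reg_r, reg_rs⟩ := (isWeaklyRegular_cons_iff M r rs).mp reg
    have ext_quot_zero (i : ℕ) (hi : i ≤ rs.length) :
        Subsingleton (Ext N (ModuleCat.of R (QuotSMulTop r M)) i) := by
      have zero_i := AddCommGrpCat.isZero_of_iff_subsingleton.mpr
        (ext_zero i (hi.trans (Nat.le_succ _)))
      have zero_succ := AddCommGrpCat.isZero_of_iff_subsingleton.mpr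
        (ext_zero (i + 1) (Nat.succ_le_succ hi))
      exact AddCommGrpCat.subsingleton_of_isZero <| ShortComplex.Exact.isZero_of_both_zeros
        (Ext.covariant_sequence_exact₃' N reg_r.smulShortComplex_shortExact i (i + 1) rfl)
        (zero_i.eq_zero_of_src _) (zero_succ.eq_zero_of_tgt _)
    have := ih (ModuleCat.of R (QuotSMulTop r M)) reg_rs ext_quot_zero
    exact (LinearEquiv.congrRight (M := N)
      (Submodule.quotOfListConsSMulTopEquivQuotSMulTopInner M r rs)).toEquiv.subsingleton

variable [Small.{v} R] [IsNoetherianRing R] {I : Ideal R} {M : Type v} [AddCommGroup M]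
  [Module R M] [Module.Finite R M] {rs : List R}

lemma length_le_length_of_le_torsionOf (smul_ne : (I • ⊤ : Submodule R M) ≠ ⊤)
    (reg : IsWeaklyRegular M rs) {q : M ⧸ (Ideal.ofList rs • ⊤ : Submodule R M)} (hq : q ≠ 0)
    (hI : I ≤ Ideal.torsionOf R _ q) {ts : List R} (ts_mem : ∀ t ∈ ts, t ∈ I)
    (ts_reg : IsRegular M ts) : ts.length ≤ rs.length := by
  by_contra! hlt
  let N := ModuleCat.of R (Shrink.{v} (R ⧸ I))
  have rees :=
    (ModuleCat.exists_isRegular_tfae I ts.length (ModuleCat.of R M) smul_ne.lt_top).out 3 1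
  have ext_zero : ∀ i < ts.length, Subsingleton (Ext N (ModuleCat.of R M) i) :=
    rees.mp ⟨ts, rfl, ts_mem, ts_reg⟩
  have hom_zero : Subsingleton (N →ₗ[R] M ⧸ (Ideal.ofList rs • ⊤ : Submodule R M)) :=
    subsingleton_linearMap_quotient_of_subsingleton_ext N rs (ModuleCat.of R M) reg
      fun i hi => ext_zero i (hi.trans_lt hlt)
  let f : R ⧸ I →ₗ[R] M ⧸ (Ideal.ofList rs • ⊤ : Submodule R M) :=
    Submodule.liftQ I (LinearMap.toSpanSingleton R _ q) hI
  let e : N ≃ₗ[R] R ⧸ I := Shrink.linearEquiv R (R ⧸ I)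
  have hf : f ∘ₗ e.toLinearMap = 0 := Subsingleton.elim _ _
  apply hq
  calc q = f (Submodule.Quotient.mk 1) := (one_smul R q).symm
    _ = (f ∘ₗ e.toLinearMap) (e.symm (Submodule.Quotient.mk 1)) := by simp
    _ = 0 := by rw [hf, LinearMap.zero_apply]

lemma moduleDepth_eq_length_of_le_colon (mem : ∀ r ∈ rs, r ∈ I) (reg : IsWeaklyRegular M rs)
    {w : M} (hw : w ∉ (I • ⊤ : Submodule R M))
    (hI : I ≤ (Ideal.ofList rs • ⊤ : Submodule R M).colon {w}) :
    moduleDepth R I M = rs.length := by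
  have smul_ne : (I • ⊤ : Submodule R M) ≠ ⊤ := fun h => hw ((Submodule.eq_top_iff'.mp h) w)
  have hw_ofList : w ∉ (Ideal.ofList rs • ⊤ : Submodule R M) := fun h =>
    hw (Submodule.smul_mono_left (Ideal.span_le.mpr mem) h)
  have ofList_smul_ne : ⊤ ≠ (Ideal.ofList rs • ⊤ : Submodule R M) := fun h =>
    hw_ofList ((Submodule.eq_top_iff'.mp h.symm) w)
  have mk_w_ne : (Submodule.Quotient.mk w : M ⧸ (Ideal.ofList rs • ⊤ : Submodule R M)) ≠ 0 :=
    fun h => hw_ofList ((Submodule.Quotient.mk_eq_zero _).mp h)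
  have le_torsionOf : I ≤ Ideal.torsionOf R (M ⧸ (Ideal.ofList rs • ⊤ : Submodule R M))
      (Submodule.Quotient.mk w) := fun a ha => by
    rw [Ideal.mem_torsionOf_iff, ← Submodule.Quotient.mk_smul, Submodule.Quotient.mk_eq_zero]
    exact Submodule.mem_colon_singleton.mp (hI ha)
  refine IsGreatest.csSup_eq ⟨⟨rs, rfl, mem, reg, ofList_smul_ne⟩, ?_⟩
  rintro k ⟨ts, rfl, ts_mem, ts_reg⟩
  exact length_le_length_of_le_torsionOf smul_ne reg mk_w_ne le_torsionOf ts_mem ts_reg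

end Depth

section BlockIntersection

open RingTheory.Sequence
open scoped Function

variable {R σ ι : Type*} [CommRing R] {A : ι → Set σ}

variable (R) in
/-- The ideal `(x_j : j ∈ B)` of the polynomial ring. -/
noncomputable abbrev idealOfVarsIn (B : Set σ) : Ideal (MvPolynomial σ R) :=
  Ideal.span (X '' B)

variable (R) in
/-- The intersection of the ideals `(x_j : j ∈ A i)`, written `I = ⋂ P_i` in the paper. -/
noncomputable abbrev interVarIdeals (A : ι → Set σ) : Ideal (MvPolynomial σ R) :=
  ⨅ i, idealOfVarsIn R (A i)

lemma ofList_map_X (c : ι → σ) (L : List ι) :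
    Ideal.ofList (L.map fun i => (X (c i) : MvPolynomial σ R)) =
      idealOfVarsIn R (c '' {i | i ∈ L}) := by
  rw [idealOfVarsIn, Set.image_image, Ideal.ofList]
  simp only [List.mem_map]
  rfl

lemma injective_of_pairwise_disjoint (hA : Pairwise (Disjoint on A)) {c : ι → σ}
    (hc : ∀ i, c i ∈ A i) : Function.Injective c := fun i l h =>
  hA.eq (Set.not_disjoint_iff.mpr ⟨c i, hc i, h ▸ hc l⟩)

lemma mem_interVarIdeals_iff {f : MvPolynomial σ R} :
    f ∈ interVarIdeals R A ↔ ∀ m ∈ f.support, ∀ i, ∃ j ∈ A i, m j ≠ 0 := by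
  simp only [Submodule.mem_iInf, mem_ideal_span_X_image]
  tauto

lemma card_le_degree_of_forall_exists_mem [Fintype ι] (hA : Pairwise (Disjoint on A))
    {m : σ →₀ ℕ} (hm : ∀ i, ∃ j ∈ A i, m j ≠ 0) : Fintype.card ι ≤ m.degree := by
  classical
  choose g hgA hgm using hm
  calc Fintype.card ι = (Finset.univ.image g).card := by
        rw [Finset.card_image_of_injective _ (injective_of_pairwise_disjoint hA hgA),
          Finset.card_univ]
    _ ≤ m.support.card := Finset.card_le_card fun j hj => by
        obtain ⟨i, -, rfl⟩ := Finset.mem_image.mp hj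
        exact Finsupp.mem_support_iff.mpr (hgm i)
    _ ≤ m.degree := Finset.card_eq_sum_ones m.support ▸
        Finset.sum_le_sum fun j hj => Nat.one_le_iff_ne_zero.mpr (Finsupp.mem_support_iff.mp hj)

lemma interVarIdeals_le_pow_idealOfVars [Fintype ι] (hA : Pairwise (Disjoint on A)) :
    interVarIdeals R A ≤ idealOfVars σ R ^ Fintype.card ι := fun f hf =>
  (mem_pow_idealOfVars_iff _ f).mpr fun m hm =>
    card_le_degree_of_forall_exists_mem hA (mem_interVarIdeals_iff.mp hf m hm)

lemma prod_X_notMem_pow_idealOfVars [Nontrivial R] [Fintype ι] (c : ι → σ) :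
    ∏ i, X (c i) ∉ idealOfVars σ R ^ (Fintype.card ι + 1) := by
  have prod_eq : ∏ i, (X (c i) : MvPolynomial σ R) =
      monomial (∑ i, Finsupp.single (c i) 1) 1 := by
    rw [monomial_sum_one]
    rfl
  rw [prod_eq, monomial_mem_pow_idealOfVars_iff _ _ one_ne_zero]
  simp

variable {c : ι → σ} (hc : ∀ i, c i ∈ A i)
include hc

lemma prod_X_mem_interVarIdeals [Fintype ι] : ∏ i, X (c i) ∈ interVarIdeals R A :=
  (Submodule.mem_iInf _).mpr fun i =>
    Ideal.mem_of_dvd _ (Finset.dvd_prod_of_mem _ (Finset.mem_univ i))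
      (Ideal.subset_span ⟨c i, hc i, rfl⟩)

lemma prod_X_notMem_idealOfVars_smul [Nontrivial R] [Fintype ι] (hA : Pairwise (Disjoint on A)) :
    (⟨∏ i, X (c i), prod_X_mem_interVarIdeals hc⟩ : interVarIdeals R A) ∉
      (idealOfVars σ R • ⊤ : Submodule (MvPolynomial σ R) (interVarIdeals R A)) := by
  rw [Submodule.mem_smul_top_iff]
  intro h
  apply prod_X_notMem_pow_idealOfVars (R := R) c
  rw [pow_succ']
  exact Ideal.mul_mono_right (interVarIdeals_le_pow_idealOfVars hA) h

lemma X_mul_prod_X_mem_idealOfVarsIn_smul [Fintype ι] {i : ι} {j : σ} (hj : j ∈ A i) :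
    X j * ∏ l, X (c l) ∈ idealOfVarsIn R (Set.range c) • interVarIdeals R A := by
  classical
  have mem_inter :
      X j * ∏ l ∈ Finset.univ.erase i, X (c l) ∈ interVarIdeals R A := by
    refine (Submodule.mem_iInf _).mpr fun l => ?_
    obtain rfl | hl := eq_or_ne l i
    · exact Ideal.mul_mem_right _ _ (Ideal.subset_span ⟨j, hj, rfl⟩)
    · exact Ideal.mem_of_dvd _
        ((Finset.dvd_prod_of_mem _ (Finset.mem_erase.mpr ⟨hl, Finset.mem_univ l⟩)).mul_left _)
        (Ideal.subset_span ⟨c l, hc l, rfl⟩)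
  rw [← Finset.mul_prod_erase _ _ (Finset.mem_univ i), mul_left_comm]
  exact Submodule.smul_mem_smul (Ideal.subset_span ⟨c i, ⟨i, rfl⟩, rfl⟩) mem_inter

lemma idealOfVars_le_colon_prod_X [Fintype ι] (iUnion_eq : ⋃ i, A i = Set.univ) :
    idealOfVars σ R ≤ (idealOfVarsIn R (Set.range c) • ⊤ : Submodule _ (interVarIdeals R A)).colon
      {⟨∏ i, X (c i), prod_X_mem_interVarIdeals hc⟩} := by
  refine Ideal.span_le.mpr (Set.range_subset_iff.mpr fun j => ?_)
  obtain ⟨i, hj⟩ := Set.iUnion_eq_univ_iff.mp iUnion_eq j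
  rw [SetLike.mem_coe, Submodule.mem_colon_singleton, Submodule.mem_smul_top_iff]
  exact X_mul_prod_X_mem_idealOfVarsIn_smul hc hj

lemma monomial_mem_idealOfVarsIn_smul_interVarIdeals (hA : Pairwise (Disjoint on A)) {T : Set ι}
    {m : σ →₀ ℕ} (hm : ∀ l, ∃ j ∈ A l, m j ≠ 0) {i : ι} (hi : i ∈ T) {j : σ} (hj : j ∈ A i)
    (hle : Finsupp.single (c i) 1 + Finsupp.single j 1 ≤ m) (a : R) :
    monomial m a ∈ idealOfVarsIn R (c '' T) • interVarIdeals R A := by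
  classical
  obtain ⟨d, rfl⟩ := exists_add_of_le hle
  have mem_inter : monomial (Finsupp.single j 1 + d) a ∈ interVarIdeals R A := by
    refine mem_interVarIdeals_iff.mpr fun e he l => ?_
    obtain rfl := Finset.mem_singleton.mp (support_monomial_subset he)
    obtain rfl | hl := eq_or_ne l i
    · exact ⟨j, hj, by simp⟩
    · obtain ⟨j', hj', hmj'⟩ := hm l
      have c_ne : c i ≠ j' := ((hA hl).ne_of_mem hj' (hc i)).symm
      exact ⟨j', hj', by simpa [Finsupp.single_eq_of_ne' c_ne] using hmj'⟩
  rw [add_assoc, ← one_mul a, ← monomial_mul]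
  exact Submodule.smul_mem_smul (Ideal.subset_span ⟨c i, ⟨i, hi, rfl⟩, rfl⟩) mem_inter

-- The second condition says that `f` lies in `∑_{i ∈ T} x_{c i} P_i`.
lemma mem_idealOfVarsIn_smul_interVarIdeals_iff (hA : Pairwise (Disjoint on A)) {T : Set ι}
    {f : MvPolynomial σ R} :
    f ∈ idealOfVarsIn R (c '' T) • interVarIdeals R A ↔
      f ∈ interVarIdeals R A ∧
        ∀ m ∈ f.support, ∃ i ∈ T, ∃ j ∈ A i, Finsupp.single (c i) 1 + Finsupp.single j 1 ≤ m := by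
  constructor
  · intro hf
    refine ⟨Submodule.smul_le_right hf, ?_⟩
    let G : Set (σ →₀ ℕ) :=
      {d | ∃ i ∈ T, ∃ j ∈ A i, Finsupp.single (c i) 1 + Finsupp.single j 1 = d}
    have smul_le_span : idealOfVarsIn R (c '' T) • interVarIdeals R A ≤
        Ideal.span ((fun d => monomial d (1 : R)) '' G) := by
      rw [Submodule.span_smul_eq]
      refine Submodule.set_smul_le _ _ _ ?_
      rintro _ g ⟨_, ⟨i, hi, rfl⟩, rfl⟩ hg
      refine mem_ideal_span_monomial_image.mpr fun m hm => ?_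
      rw [smul_eq_mul, support_X_mul] at hm
      obtain ⟨d, hd, rfl⟩ := Finset.mem_map.mp hm
      obtain ⟨j, hj, hdj⟩ := mem_interVarIdeals_iff.mp hg d hd i
      exact ⟨_, ⟨i, hi, j, hj, rfl⟩,
        add_le_add_right (Finsupp.single_le_iff.mpr (Nat.one_le_iff_ne_zero.mpr hdj)) _⟩
    intro m hm
    obtain ⟨_, ⟨i, hi, j, hj, rfl⟩, hle⟩ := mem_ideal_span_monomial_image.mp (smul_le_span hf) m hm
    exact ⟨i, hi, j, hj, hle⟩
  · rintro ⟨hf, hT⟩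
    rw [f.as_sum]
    refine Submodule.sum_mem _ fun m hm => ?_
    obtain ⟨i, hi, j, hj, hle⟩ := hT m hm
    exact monomial_mem_idealOfVarsIn_smul_interVarIdeals hc hA
      (mem_interVarIdeals_iff.mp hf m hm) hi hj hle _

lemma mem_idealOfVarsIn_smul_of_X_mul_mem (hA : Pairwise (Disjoint on A)) {T : Set ι} {k : ι}
    (hk : k ∉ T) {f : MvPolynomial σ R} (hf : f ∈ interVarIdeals R A)
    (hXf : X (c k) * f ∈ idealOfVarsIn R (c '' T) • interVarIdeals R A) :
    f ∈ idealOfVarsIn R (c '' T) • interVarIdeals R A := by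
  refine (mem_idealOfVarsIn_smul_interVarIdeals_iff hc hA).mpr ⟨hf, fun m hm => ?_⟩
  obtain ⟨i, hi, j, hj, hle⟩ := ((mem_idealOfVarsIn_smul_interVarIdeals_iff hc hA).mp hXf).2
    (Finsupp.single (c k) 1 + m) (by
      rw [support_X_mul]
      exact Finset.mem_map_of_mem _ hm)
  have disj : Disjoint (A k) (A i) := hA (ne_of_mem_of_not_mem hi hk).symm
  refine ⟨i, hi, j, hj, fun l => ?_⟩
  obtain rfl | hl := eq_or_ne l (c k)
  · simp [Finsupp.single_eq_of_ne (disj.ne_of_mem (hc k) (hc i)),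
      Finsupp.single_eq_of_ne (disj.ne_of_mem (hc k) hj)]
  · simpa [Finsupp.single_eq_of_ne hl] using hle l

lemma isWeaklyRegular_map_X (hA : Pairwise (Disjoint on A)) {L : List ι} (hL : L.Nodup) :
    IsWeaklyRegular (interVarIdeals R A) (L.map fun i => (X (c i) : MvPolynomial σ R)) := by
  refine ⟨fun k hk => ?_⟩
  have hkL : k < L.length := by simpa using hk
  have notMem_take : L[k] ∉ {i | i ∈ L.take k} := fun h => by
    obtain ⟨i, hi, h_eq⟩ := List.mem_take_iff_getElem.mp h
    have : i = k := (hL.getElem_inj_iff).mp h_eq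
    omega
  rw [isSMulRegular_iff_right_eq_zero_of_smul, List.getElem_map, ← List.map_take, ofList_map_X]
  intro q hq
  obtain ⟨f, rfl⟩ := Submodule.Quotient.mk_surjective _ q
  rw [← Submodule.Quotient.mk_smul, Submodule.Quotient.mk_eq_zero,
    Submodule.mem_smul_top_iff] at hq
  rw [Submodule.Quotient.mk_eq_zero, Submodule.mem_smul_top_iff]
  exact mem_idealOfVarsIn_smul_of_X_mul_mem hc hA notMem_take f.2 hq

end BlockIntersection

open scoped Function in
theorem depth_inter_disjoint_primes_general {R σ ι : Type*} [CommRing R] [IsNoetherianRing R]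
    [Nontrivial R] [Finite σ] {A : ι → Set σ} (disjoint : Pairwise (Disjoint on A))
    (nonempty : ∀ i, (A i).Nonempty) (iUnion_eq : ⋃ i, A i = Set.univ) :
    moduleDepth (MvPolynomial σ R) (idealOfVars σ R) (interVarIdeals R A) = Nat.card ι := by
  choose c hc using nonempty
  have := Finite.of_injective c (injective_of_pairwise_disjoint disjoint hc)
  have := Fintype.ofFinite ι
  let rs : List (MvPolynomial σ R) := Finset.univ.toList.map fun i => X (c i)
  have ofList_rs : Ideal.ofList rs = idealOfVarsIn R (Set.range c) := by simp [rs, ofList_map_X]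
  have mem : ∀ p ∈ rs, p ∈ idealOfVars σ R :=
    List.forall_mem_map.mpr fun i _ => Ideal.subset_span ⟨c i, rfl⟩
  have reg : RingTheory.Sequence.IsWeaklyRegular (interVarIdeals R A) rs :=
    isWeaklyRegular_map_X hc disjoint (Finset.nodup_toList _)
  rw [moduleDepth_eq_length_of_le_colon mem reg (prod_X_notMem_idealOfVars_smul hc disjoint)
    (ofList_rs ▸ idealOfVars_le_colon_prod_X hc iUnion_eq)]
  simp [rs]

section ConsecutiveBlocks

open scoped Function

/-- The `i`-th of the consecutive blocks of variables cut out by the endpoints `r`. Indices start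
at `0`, so in the paper's notation this is the block of the variables `x_{r_i + 1}, …, x_{r_{i+1}}`
generating `P_{i+1}`. -/
def consecutiveBlock (n : ℕ) (r : ℕ → ℕ) (i : ℕ) : Set (Fin n) :=
  Fin.val ⁻¹' Set.Ico (r i) (r (i + 1))

variable {n s : ℕ} {r : ℕ → ℕ}

lemma pairwise_disjoint_consecutiveBlock (hr : MonotoneOn r (Set.Iic s)) :
    Pairwise (Disjoint on fun i : Fin s => consecutiveBlock n r i) :=
  (pairwise_disjoint_on _).mpr fun i k hik => Set.disjoint_left.mpr fun _ hi hk =>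
    (hi.2.trans_le (hr (Nat.succ_le_of_lt i.2) k.2.le (Nat.succ_le_of_lt hik))).not_ge hk.1

lemma consecutiveBlock_nonempty (hr : StrictMonoOn r (Set.Iic s)) (hn : r s ≤ n) (i : Fin s) :
    (consecutiveBlock n r i).Nonempty :=
  ⟨⟨r i, (hr i.2.le Set.self_mem_Iic i.2).trans_le hn⟩, le_rfl,
    hr i.2.le (Nat.succ_le_of_lt i.2) (Nat.lt_succ_self i)⟩

lemma exists_lt_mem_Ico_succ {α : Type*} [LinearOrder α] {r : ℕ → α} {a : α} (h0 : r 0 ≤ a)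
    (hs : a < r s) : ∃ i < s, a ∈ Set.Ico (r i) (r (i + 1)) := by
  induction s with
  | zero => exact absurd hs h0.not_gt
  | succ s ih =>
    obtain has | hsa := lt_or_ge a (r s)
    · obtain ⟨i, hi, ha⟩ := ih has
      exact ⟨i, hi.trans s.lt_succ_self, ha⟩
    · exact ⟨s, s.lt_succ_self, hsa, hs⟩

lemma iUnion_consecutiveBlock (h0 : r 0 = 0) (hn : n ≤ r s) :
    ⋃ i : Fin s, consecutiveBlock n r i = Set.univ := by
  refine Set.iUnion_eq_univ_iff.mpr fun j => ?_
  obtain ⟨i, hi, hj⟩ := exists_lt_mem_Ico_succ (h0.trans_le j.1.zero_le) (j.2.trans_le hn)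
  exact ⟨⟨i, hi⟩, hj⟩

lemma maxIdeal_eq_idealOfVars (n : ℕ) (K : Type*) [Field K] :
    maxIdeal n K = idealOfVars (Fin n) K := by
  rw [maxIdeal, varIdeal, Finset.coe_univ, Set.image_univ]

lemma iInf_varIdeal_eq_interVarIdeals (K : Type*) [Field K] (n s : ℕ) (r : ℕ → ℕ) :
    (⨅ i ∈ Finset.range s, varIdeal K
      (Finset.univ.filter fun j : Fin n => r i ≤ (j : ℕ) ∧ (j : ℕ) < r (i + 1))) =
      interVarIdeals K fun i : Fin s => consecutiveBlock n r i := by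
  ext f
  simp [varIdeal, Submodule.mem_iInf, Fin.forall_iff, consecutiveBlock, Set.preimage]

end ConsecutiveBlocks

/-- for primes `P_i` generated by disjoint consecutive blocks of
variables partitioning all `n` variables, `depth (P₁ ∩ ⋯ ∩ P_s) = s`. -/
theorem depth_inter_disjoint_primes {K : Type*} [Field K] (n s : ℕ) (hs : 0 < s)
    (r : ℕ → ℕ) (h0 : r 0 = 0) (hn : r s = n) (hmono : ∀ i < s, r i < r (i + 1)) :
    moduleDepth (MvPolynomial (Fin n) K) (maxIdeal n K)
      ↥(⨅ i ∈ Finset.range s, varIdeal K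
          (Finset.univ.filter fun j : Fin n => r i ≤ (j : ℕ) ∧ (j : ℕ) < r (i + 1))) =
      s := by
  have hr : StrictMonoOn r (Set.Iic s) := strictMonoOn_Iic_of_lt_succ hmono
  rw [maxIdeal_eq_idealOfVars, iInf_varIdeal_eq_interVarIdeals,
    depth_inter_disjoint_primes_general (pairwise_disjoint_consecutiveBlock hr.monotoneOn)
      (consecutiveBlock_nonempty hr hn.le) (iUnion_consecutiveBlock h0 hn.ge), Nat.card_fin]
end

section
/- Let P_1, P_2, P_3 be three non-zero monomial prime ideals of S = K[x_1,...,x_n], none contained in another, with P_1 + P_2 + P_3 = (x_1,...,x_n), and I = P_1 ∩ P_2 ∩ P_3. If P_1 ⊆ P_2 + P_3, then depth_S(I) = n + 2 − max{ht(P_1 + P_2), ht(P_1 + P_3)}. -/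
open MvPolynomial

/-!
Write `m` for the graded maximal ideal. By Rees' theorem `depth M` is the least `i` with
`Ext^i(S/m, M) ≠ 0`, so depth can be followed along short exact sequences. Dividing out the
variables outside `A` one at a time gives `depth S/P_A = n - |A|`, hence `depth P_A = n - |A| + 1`.
The sequence `0 → P ∩ Q → P ⊕ Q → P + Q → 0` then shows `depth (P₁ ∩ P₂) ≥ n - |A₁ ∪ A₂| + 2`.
Since `P₁ ⊆ P₂ + P₃`, we have `(P₁ ∩ P₂) + P₃ = P₁ + P₃`, and when `|A₁ ∪ A₂| ≤ |A₁ ∪ A₃|` the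
same sequence for `P₁ ∩ P₂` and `P₃` gives `depth I = depth (P₁ + P₃) + 1`.
-/

open CategoryTheory Abelian

universe w v u

section ExtGrade

variable {C : Type u} [Category.{v} C] [Abelian C] [HasExt.{w} C]

/-- The grade of `Y` with respect to `X`: the least `i` with `Ext X Y i ≠ 0`, and `⊤` if all these
groups vanish. -/
noncomputable def extGrade (X Y : C) : ℕ∞ :=
  ⨅ (i : ℕ) (_ : Nontrivial (Ext X Y i)), (i : ℕ∞)

theorem le_extGrade_iff {X Y : C} {d : ℕ∞} :
    d ≤ extGrade X Y ↔ ∀ i : ℕ, (i : ℕ∞) < d → Subsingleton (Ext X Y i) := by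
  simp only [extGrade, le_iInf_iff, ← not_nontrivial_iff_subsingleton]
  exact forall_congr' fun i ↦ by rw [← not_lt, imp_not_comm]

theorem subsingleton_ext_of_lt_extGrade {X Y : C} {i : ℕ} (hi : (i : ℕ∞) < extGrade X Y) :
    Subsingleton (Ext X Y i) :=
  le_extGrade_iff.mp le_rfl i hi

theorem extGrade_self_eq_zero {X : C} (hX : ¬Limits.IsZero X) : extGrade X X = 0 := by
  by_contra hne
  have : Subsingleton (Ext X X 0) :=
    subsingleton_ext_of_lt_extGrade (by simpa using pos_iff_ne_zero.mpr hne)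
  have : Subsingleton (X ⟶ X) := Ext.addEquiv₀.subsingleton_congr.mp this
  exact hX ((Limits.IsZero.iff_id_eq_zero X).mpr (Subsingleton.elim _ _))

theorem extGrade_eq_top_of_isZero (X : C) {Y : C} (hY : Limits.IsZero Y) : extGrade X Y = ⊤ := by
  refine top_le_iff.mp <| le_extGrade_iff.mpr fun i _ ↦ subsingleton_of_forall_eq 0 fun y ↦ ?_
  rw [← y.comp_mk₀_id, hY.eq_of_src (𝟙 Y) 0, Ext.mk₀_zero, Ext.comp_zero]

theorem extGrade_congr_right (X : C) {Y Y' : C} (e : Y ≅ Y') : extGrade X Y = extGrade X Y' :=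
  iInf_congr fun i ↦ iInf_congr_Prop
    ((extFunctorObj X i).mapIso e).addCommGroupIsoToAddEquiv.toEquiv.nontrivial_congr fun _ ↦ rfl

variable {S : ShortComplex C}

theorem le_extGrade_X₁_of_comp_eq_zero (hS : S.ShortExact) (X : C) {d : ℕ∞}
    (hd : d ≤ extGrade X S.X₃ + 1)
    (hf : ∀ i : ℕ, (i : ℕ∞) < d → ∀ y : Ext X S.X₁ i, y.comp (Ext.mk₀ S.f) (add_zero i) = 0) :
    d ≤ extGrade X S.X₁ := by
  refine le_extGrade_iff.mpr fun i hi ↦ subsingleton_of_forall_eq 0 fun y ↦ ?_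
  cases i with
  | zero =>
    have := hS.mono_f
    exact Ext.postcomp_mk₀_injective_of_mono X S.f ((hf 0 hi y).trans (map_zero _).symm)
  | succ i =>
    obtain ⟨z, rfl⟩ := Ext.covariant_sequence_exact₁ X hS y (hf _ hi y) rfl
    have hi' : (i : ℕ∞) < extGrade X S.X₃ := by simpa using hi.trans_le hd
    have := subsingleton_ext_of_lt_extGrade hi'
    rw [Subsingleton.elim z 0, Ext.zero_comp]

theorem min_extGrade_le_extGrade_X₁ (hS : S.ShortExact) (X : C) :
    min (extGrade X S.X₂) (extGrade X S.X₃ + 1) ≤ extGrade X S.X₁ := by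
  refine le_extGrade_X₁_of_comp_eq_zero hS X (min_le_right _ _) fun i hi y ↦ ?_
  have := subsingleton_ext_of_lt_extGrade (hi.trans_le (min_le_left _ _))
  exact Subsingleton.elim _ _

theorem min_extGrade_le_extGrade_X₂ (hS : S.ShortExact) (X : C) :
    min (extGrade X S.X₁) (extGrade X S.X₃) ≤ extGrade X S.X₂ := by
  refine le_extGrade_iff.mpr fun i hi ↦ subsingleton_of_forall_eq 0 fun y ↦ ?_
  have := subsingleton_ext_of_lt_extGrade (hi.trans_le (min_le_left _ _))
  have := subsingleton_ext_of_lt_extGrade (hi.trans_le (min_le_right _ _))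
  obtain ⟨z, rfl⟩ := Ext.covariant_sequence_exact₂ X hS y (Subsingleton.elim _ _)
  rw [Subsingleton.elim z 0, Ext.zero_comp]

theorem extGrade_X₁_le_of_lt (hS : S.ShortExact) (X : C)
    (h : extGrade X S.X₃ < extGrade X S.X₂) :
    extGrade X S.X₁ ≤ extGrade X S.X₃ + 1 := by
  by_contra! hlt
  suffices extGrade X S.X₃ + 1 ≤ extGrade X S.X₃ from
    (ENat.add_one_le_iff h.ne_top).mp this |>.false
  refine le_extGrade_iff.mpr fun i hi ↦ subsingleton_of_forall_eq 0 fun y ↦ ?_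
  have hi₃ : (i : ℕ∞) ≤ extGrade X S.X₃ := Order.le_of_lt_add_one hi
  have hi₁ : ((i + 1 : ℕ) : ℕ∞) < extGrade X S.X₁ := by
    push_cast
    exact lt_of_le_of_lt (by gcongr) hlt
  have := subsingleton_ext_of_lt_extGrade (hi₃.trans_lt h)
  have := subsingleton_ext_of_lt_extGrade hi₁
  obtain ⟨z, rfl⟩ := Ext.covariant_sequence_exact₃ X hS y rfl (Subsingleton.elim _ _)
  rw [Subsingleton.elim z 0, Ext.zero_comp]

theorem extGrade_X₁_eq_add_one_of_lt (hS : S.ShortExact) (X : C)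
    (h : extGrade X S.X₃ < extGrade X S.X₂) :
    extGrade X S.X₁ = extGrade X S.X₃ + 1 :=
  (extGrade_X₁_le_of_lt hS X h).antisymm <|
    (le_min (Order.add_one_le_of_lt h) le_rfl).trans (min_extGrade_le_extGrade_X₁ hS X)

end ExtGrade

section ModuleGrade

variable (R : Type u) [CommRing R] [Small.{v} R]

/-- The grade of the module `M` with respect to the module `N`. For `N = R ⧸ I` this is the
homological description of the `I`-depth of `M`. -/
noncomputable abbrev moduleGrade (N M : Type v) [AddCommGroup N] [Module R N]
    [AddCommGroup M] [Module R M] : ℕ∞ :=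
  extGrade (ModuleCat.of R N) (ModuleCat.of R M)

theorem moduleGrade_self_eq_zero (N : Type v) [AddCommGroup N] [Module R N] [Nontrivial N] :
    moduleGrade R N N = 0 :=
  extGrade_self_eq_zero fun h ↦
    not_subsingleton N (ModuleCat.isZero_of_iff_subsingleton.mp h)

theorem moduleGrade_eq_top_of_subsingleton (N M : Type v) [AddCommGroup N] [Module R N]
    [AddCommGroup M] [Module R M] [Subsingleton M] : moduleGrade R N M = ⊤ :=
  extGrade_eq_top_of_isZero _ (ModuleCat.isZero_of_subsingleton _)

variable {R} {N M Q : Type v} [AddCommGroup N] [Module R N] [AddCommGroup M] [Module R M]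
  [AddCommGroup Q] [Module R Q]

theorem moduleGrade_eq_add_one_of_isSMulRegular {x : R} (hx : x ∈ Module.annihilator R N)
    (hreg : IsSMulRegular M x) {g : M →ₗ[R] Q} (hexact : Function.Exact (LinearMap.lsmul R M x) g)
    (hg : Function.Surjective g) : moduleGrade R N M = moduleGrade R N Q + 1 := by
  have hS := ModuleCat.shortComplex_shortExact
    (ModuleCat.shortComplexOfCompEqZero _ g hexact.linearMap_comp_eq_zero) hexact hreg hg
  refine le_antisymm ?_ (le_extGrade_X₁_of_comp_eq_zero hS _ le_rfl fun i _ y ↦ ?_)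
  · by_contra! hlt
    exact (extGrade_X₁_le_of_lt hS _ (le_self_add.trans_lt hlt)).not_gt hlt
  · -- `x` kills `N`, so multiplication by `x` on `M` induces the zero map on `Ext N M`.
    have hzero := Ext.postcomp_smul_id_eq_zero_of_mem_annihilator
      (M := ModuleCat.of R M) (N := ModuleCat.of R N) hx i
    exact DFunLike.congr_fun (congrArg AddCommGrpCat.Hom.hom hzero) y

theorem min_moduleGrade_le_moduleGrade_prod :
    min (moduleGrade R N M) (moduleGrade R N Q) ≤ moduleGrade R N (M × Q) :=
  min_extGrade_le_extGrade_X₂ (ModuleCat.shortComplex_shortExact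
    (ModuleCat.shortComplexOfCompEqZero (LinearMap.inl R M Q) (LinearMap.snd R M Q)
      (LinearMap.snd_comp_inl ..))
    Function.Exact.inl_snd LinearMap.inl_injective LinearMap.snd_surjective) _

theorem moduleGrade_submodule_eq_add_one_of_lt (p : Submodule R M)
    (h : moduleGrade R N (M ⧸ p) < moduleGrade R N M) :
    moduleGrade R N p = moduleGrade R N (M ⧸ p) + 1 :=
  extGrade_X₁_eq_add_one_of_lt (ModuleCat.shortComplex_shortExact
    (ModuleCat.shortComplexOfCompEqZero p.subtype p.mkQ
      (LinearMap.exact_subtype_mkQ p).linearMap_comp_eq_zero)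
    (LinearMap.exact_subtype_mkQ p) p.subtype_injective p.mkQ_surjective) _ h

end ModuleGrade

section MayerVietoris

variable {R : Type u} [CommRing R] {M : Type v} [AddCommGroup M] [Module R M]

/-- The Mayer–Vietoris sequence `p ⊓ q → p × q → p ⊔ q`, with maps `x ↦ (x, x)` and
`(x, y) ↦ x - y`. -/
abbrev infProdSupShortComplex (p q : Submodule R M) : ShortComplex (ModuleCat.{v} R) :=
  ModuleCat.shortComplexOfCompEqZero
    ((Submodule.inclusion inf_le_left).prod (Submodule.inclusion inf_le_right) :
      ↥(p ⊓ q) →ₗ[R] p × q)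
    ((Submodule.inclusion le_sup_left).coprod (-Submodule.inclusion le_sup_right) :
      p × q →ₗ[R] ↥(p ⊔ q))
    (LinearMap.ext fun x ↦ Subtype.ext (add_neg_cancel (x : M)))

theorem infProdSupShortComplex_shortExact (p q : Submodule R M) :
    (infProdSupShortComplex p q).ShortExact := by
  apply ModuleCat.shortComplex_shortExact
  · rintro ⟨⟨x, hx⟩, ⟨y, hy⟩⟩
    refine ⟨fun h ↦ ?_, ?_⟩
    · obtain rfl : x = y := eq_of_sub_eq_zero <|
        (sub_eq_add_neg x y).trans (congrArg Subtype.val h)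
      exact ⟨⟨x, hx, hy⟩, rfl⟩
    · rintro ⟨z, hz⟩
      cases hz
      exact Subtype.ext (add_neg_cancel (z : M))
  · exact fun x y h ↦ Subtype.ext (congrArg (fun z : p × q ↦ (z.1 : M)) h)
  · rintro ⟨_, hz⟩
    obtain ⟨x, hx, y, hy, rfl⟩ := Submodule.mem_sup.mp hz
    exact ⟨(⟨x, hx⟩, ⟨-y, q.neg_mem hy⟩), Subtype.ext (congrArg (x + ·) (neg_neg y))⟩

variable [Small.{v} R] {N : Type v} [AddCommGroup N] [Module R N] (p q : Submodule R M)

theorem min_moduleGrade_le_moduleGrade_inf :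
    min (min (moduleGrade R N p) (moduleGrade R N q)) (moduleGrade R N ↥(p ⊔ q) + 1) ≤
      moduleGrade R N ↥(p ⊓ q) :=
  (min_le_min_right _ min_moduleGrade_le_moduleGrade_prod).trans <|
    min_extGrade_le_extGrade_X₁ (infProdSupShortComplex_shortExact p q) _

theorem moduleGrade_inf_eq_add_one_of_lt (hp : moduleGrade R N ↥(p ⊔ q) < moduleGrade R N p)
    (hq : moduleGrade R N ↥(p ⊔ q) < moduleGrade R N q) :
    moduleGrade R N ↥(p ⊓ q) = moduleGrade R N ↥(p ⊔ q) + 1 :=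
  extGrade_X₁_eq_add_one_of_lt (infProdSupShortComplex_shortExact p q) _ <|
    (lt_min hp hq).trans_le min_moduleGrade_le_moduleGrade_prod

end MayerVietoris

section Depth

variable {R : Type u} [CommRing R]

theorem moduleDepth_eq_of_moduleGrade_eq [IsNoetherianRing R] {I : Ideal R} {M : Type u}
    [AddCommGroup M] [Module R M] [Module.Finite R M] (hIM : I • (⊤ : Submodule R M) ≠ ⊤) {d : ℕ}
    (hd : moduleGrade R (R ⧸ I) M = d) : moduleDepth R I M = d := by
  have hsupp : Module.support R (R ⧸ I) = PrimeSpectrum.zeroLocus I := by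
    rw [Module.support_eq_zeroLocus, Ideal.annihilator_quotient]
  have rees (k : ℕ) : (∃ rs : List R, rs.length = k ∧ (∀ r ∈ rs, r ∈ I) ∧
      RingTheory.Sequence.IsRegular M rs) ↔ k ≤ d := by
    rw [← Nat.cast_le (α := ℕ∞), ← hd, le_extGrade_iff]
    simp only [Nat.cast_lt]
    constructor
    · rintro ⟨rs, rfl, hmem, hreg⟩
      exact ModuleCat.subsingleton_ext_of_exists_isRegular I (ModuleCat.of R (R ⧸ I)) hsupp.le
        (ModuleCat.of R M) hIM.lt_top rs hmem hreg
    · exact ModuleCat.exists_isRegular_of_exists_subsingleton_ext I k (ModuleCat.of R M)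
        hIM.lt_top (ModuleCat.of R (R ⧸ I)) hsupp
  simp only [moduleDepth, rees]
  exact csSup_Iic

theorem ideal_smul_top_ne_top_of_faithfulSMul {I : Ideal R} (hI : I ≠ ⊤) (M : Type v)
    [AddCommGroup M] [Module R M] [Module.Finite R M] [FaithfulSMul R M] :
    I • (⊤ : Submodule R M) ≠ ⊤ := by
  intro htop
  obtain ⟨r, hr, hrM⟩ := Submodule.exists_sub_one_mem_and_smul_eq_zero_of_fg_of_le_smul I
    (⊤ : Submodule R M) Module.Finite.fg_top htop.ge
  obtain rfl : r = 0 := FaithfulSMul.eq_of_smul_eq_smul (α := M) fun m ↦ by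
    rw [hrM m Submodule.mem_top, zero_smul]
  exact (Ideal.ne_top_iff_one I).mp hI (by simpa using hr)

theorem exact_lsmul_factor_span_singleton_sup (I : Ideal R) (x : R) :
    Function.Exact (LinearMap.lsmul R (R ⧸ I) x)
      (Submodule.factor (le_sup_right : I ≤ Ideal.span {x} ⊔ I)) := by
  intro y
  obtain ⟨f, rfl⟩ := Submodule.mkQ_surjective I y
  rw [Submodule.factor_mk, Submodule.mkQ_apply, Submodule.Quotient.mk_eq_zero,
    Ideal.mem_span_singleton_sup]
  constructor
  · rintro ⟨a, b, hb, rfl⟩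
    refine ⟨Submodule.Quotient.mk a, (Submodule.Quotient.eq I).mpr ?_⟩
    change x * a - (a * x + b) ∈ I
    rw [mul_comm, sub_add_cancel_left]
    exact I.neg_mem hb
  · rintro ⟨z, hz⟩
    obtain ⟨a, rfl⟩ := Submodule.mkQ_surjective I z
    have hmem : x * a - f ∈ I := (Submodule.Quotient.eq I).mp hz
    exact ⟨a, f - x * a, by simpa using I.neg_mem hmem, by ring⟩

end Depth

theorem card_compl_union_lt {α : Type*} [Fintype α] [DecidableEq α] {s t : Finset α}
    (h : ¬s ⊆ t) : (s ∪ t)ᶜ.card < tᶜ.card := by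
  refine Finset.card_lt_card (Finset.compl_ssubset_compl.mpr ?_)
  exact Finset.subset_union_right.ssubset_of_not_subset fun hsub ↦ h (Finset.union_subset_left hsub)

section VarIdeal

variable {n : ℕ} {K : Type u} [Field K] {A B C : Finset (Fin n)}

theorem mem_varIdeal_iff {f : MvPolynomial (Fin n) K} :
    f ∈ varIdeal K A ↔ ∀ m ∈ f.support, ∃ i ∈ A, m i ≠ 0 := by
  simpa [varIdeal] using mem_ideal_span_X_image (x := f) (s := (A : Set (Fin n)))

theorem X_mem_varIdeal_iff {i : Fin n} : (X i : MvPolynomial (Fin n) K) ∈ varIdeal K A ↔ i ∈ A := by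
  simp [mem_varIdeal_iff, support_X, Finsupp.single_apply]

theorem varIdeal_le_iff_forall_X_mem {I : Ideal (MvPolynomial (Fin n) K)} :
    varIdeal K A ≤ I ↔ ∀ i ∈ A, (X i : MvPolynomial (Fin n) K) ∈ I := by
  simp [varIdeal, Ideal.span_le, Set.subset_def]

theorem varIdeal_le_varIdeal_iff : varIdeal K A ≤ varIdeal K B ↔ A ⊆ B := by
  simp only [varIdeal_le_iff_forall_X_mem, X_mem_varIdeal_iff, Finset.subset_iff]

theorem varIdeal_union : varIdeal K (A ∪ B) = varIdeal K A ⊔ varIdeal K B := by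
  simp [varIdeal, Set.image_union, Submodule.span_union]

theorem varIdeal_insert (j : Fin n) :
    varIdeal K (insert j A) = Ideal.span {X j} ⊔ varIdeal K A := by
  simp [varIdeal, Set.image_insert_eq, Ideal.span_insert]

theorem varIdeal_empty : varIdeal K (∅ : Finset (Fin n)) = ⊥ := by
  simp [varIdeal]

theorem varIdeal_ne_top : varIdeal K A ≠ ⊤ := by
  simp [Ideal.ne_top_iff_one, mem_varIdeal_iff]

theorem varIdeal_inf_sup_of_subset (h : A ⊆ B ∪ C) :
    varIdeal K A ⊓ varIdeal K B ⊔ varIdeal K C = varIdeal K A ⊔ varIdeal K C := by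
  refine le_antisymm (sup_le_sup_right inf_le_left _) (sup_le ?_ le_sup_right)
  refine varIdeal_le_iff_forall_X_mem.mpr fun i hi ↦ ?_
  rcases Finset.mem_union.mp (h hi) with hB | hC
  · exact Ideal.mem_sup_left ⟨X_mem_varIdeal_iff.mpr hi, X_mem_varIdeal_iff.mpr hB⟩
  · exact Ideal.mem_sup_right (X_mem_varIdeal_iff.mpr hC)

theorem isSMulRegular_X_quotient_varIdeal {j : Fin n} (hj : j ∉ A) :
    IsSMulRegular (MvPolynomial (Fin n) K ⧸ varIdeal K A) (X j : MvPolynomial (Fin n) K) := by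
  refine isSMulRegular_quotient_iff_mem_of_smul_mem _ _ |>.mpr fun f hf ↦ ?_
  rw [smul_eq_mul, mem_varIdeal_iff] at hf
  refine mem_varIdeal_iff.mpr fun m hm ↦ ?_
  obtain ⟨i, hi, hmi⟩ := hf (Finsupp.single j 1 + m) (by simpa [coeff_X_mul] using hm)
  have hji : j ≠ i := fun h ↦ hj (h ▸ hi)
  exact ⟨i, hi, by simpa [hji] using hmi⟩

variable (n K) in
/-- The grade of a `K[x₁, …, xₙ]`-module `M` with respect to the residue field at the graded maximal
ideal `m`; by Rees' theorem it computes the depth of `M` when `M` is finite and `m M ≠ M`. -/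
noncomputable abbrev residueGrade (M : Type u) [AddCommGroup M]
    [Module (MvPolynomial (Fin n) K) M] : ℕ∞ :=
  moduleGrade (MvPolynomial (Fin n) K) (MvPolynomial (Fin n) K ⧸ maxIdeal n K) M

theorem residueGrade_quotient_varIdeal (A : Finset (Fin n)) :
    residueGrade n K (MvPolynomial (Fin n) K ⧸ varIdeal K A) = Aᶜ.card := by
  induction hk : Aᶜ.card generalizing A with
  | zero =>
    obtain rfl : A = Finset.univ := by simpa using hk
    have : Nontrivial (MvPolynomial (Fin n) K ⧸ maxIdeal n K) :=
      Ideal.Quotient.nontrivial_iff.mpr varIdeal_ne_top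
    exact moduleGrade_self_eq_zero _ _
  | succ k ih =>
    obtain ⟨j, hj⟩ : Aᶜ.Nonempty := Finset.card_pos.mp (by omega)
    have hcard : (insert j A)ᶜ.card = k := by
      rw [Finset.compl_insert, Finset.card_erase_of_mem hj, hk, Nat.add_sub_cancel]
    have hX : X j ∈ Module.annihilator (MvPolynomial (Fin n) K)
        (MvPolynomial (Fin n) K ⧸ maxIdeal n K) := by
      rw [Ideal.annihilator_quotient]
      exact X_mem_varIdeal_iff.mpr (Finset.mem_univ j)
    calc residueGrade n K (MvPolynomial (Fin n) K ⧸ varIdeal K A)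
        = residueGrade n K (MvPolynomial (Fin n) K ⧸ Ideal.span {X j} ⊔ varIdeal K A) + 1 :=
          moduleGrade_eq_add_one_of_isSMulRegular hX
            (isSMulRegular_X_quotient_varIdeal (Finset.mem_compl.mp hj))
            (exact_lsmul_factor_span_singleton_sup (varIdeal K A) (X j))
            (Submodule.factor_surjective _)
      _ = (k + 1 : ℕ) := by rw [← varIdeal_insert, ih _ hcard, Nat.cast_succ]

theorem residueGrade_mvPolynomial : residueGrade n K (MvPolynomial (Fin n) K) = n := by
  have e := (Submodule.quotEquivOfEqBot _ (varIdeal_empty (n := n) (K := K))).toModuleIso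
  calc residueGrade n K (MvPolynomial (Fin n) K)
      = residueGrade n K (MvPolynomial (Fin n) K ⧸ varIdeal K (∅ : Finset (Fin n))) :=
        (extGrade_congr_right _ e).symm
    _ = n := by rw [residueGrade_quotient_varIdeal, Finset.compl_empty, Finset.card_fin]

theorem residueGrade_varIdeal (hA : A.Nonempty) :
    residueGrade n K (varIdeal K A) = Aᶜ.card + 1 := by
  have hlt : residueGrade n K (MvPolynomial (Fin n) K ⧸ varIdeal K A) <
      residueGrade n K (MvPolynomial (Fin n) K) := by
    rw [residueGrade_quotient_varIdeal, residueGrade_mvPolynomial, Nat.cast_lt]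
    simpa using Finset.card_compl_lt_iff_nonempty A |>.mpr hA
  rw [← residueGrade_quotient_varIdeal (K := K)]
  exact moduleGrade_submodule_eq_add_one_of_lt _ hlt

theorem add_two_le_residueGrade_varIdeal_inf (hB : B.Nonempty) (hAB : ¬A ⊆ B) :
    (A ∪ B)ᶜ.card + 2 ≤ residueGrade n K ↥(varIdeal K A ⊓ varIdeal K B) := by
  have hA : A.Nonempty := (Finset.not_subset.mp hAB).imp fun _ ↦ And.left
  have hltB := card_compl_union_lt hAB
  by_cases hBA : B ⊆ A
  · rw [inf_eq_right.mpr (varIdeal_le_varIdeal_iff.mpr hBA), residueGrade_varIdeal hB]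
    norm_cast
    omega
  · have hltA := card_compl_union_lt hBA
    rw [Finset.union_comm] at hltA
    have hmin : min (min (residueGrade n K (varIdeal K A)) (residueGrade n K (varIdeal K B)))
        (residueGrade n K ↥(varIdeal K A ⊔ varIdeal K B) + 1) ≤
          residueGrade n K ↥(varIdeal K A ⊓ varIdeal K B) :=
      min_moduleGrade_le_moduleGrade_inf _ _
    refine le_trans ?_ hmin
    rw [residueGrade_varIdeal hA, residueGrade_varIdeal hB, ← varIdeal_union,
      residueGrade_varIdeal hA.inl]
    refine le_min (le_min ?_ ?_) ?_ <;> norm_cast <;> omega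

theorem residueGrade_varIdeal_inf_inf (hA : A ⊆ B ∪ C) (hAB : ¬A ⊆ B) (hAC : ¬A ⊆ C)
    (hcard : (A ∪ B).card ≤ (A ∪ C).card) :
    residueGrade n K ↥(varIdeal K A ⊓ varIdeal K B ⊓ varIdeal K C) = (A ∪ C)ᶜ.card + 2 := by
  have hB : B.Nonempty := Finset.nonempty_iff_ne_empty.mpr fun h ↦ hAC (by simpa [h] using hA)
  have hC : C.Nonempty := Finset.nonempty_iff_ne_empty.mpr fun h ↦ hAB (by simpa [h] using hA)
  have hcompl : (A ∪ C)ᶜ.card ≤ (A ∪ B)ᶜ.card := by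
    rw [Finset.card_compl, Finset.card_compl]
    exact Nat.sub_le_sub_left hcard _
  have hsup : residueGrade n K ↥(varIdeal K A ⊓ varIdeal K B ⊔ varIdeal K C) =
      (A ∪ C)ᶜ.card + 1 := by
    rw [varIdeal_inf_sup_of_subset hA, ← varIdeal_union, residueGrade_varIdeal hC.inr]
  have hlt_inf : residueGrade n K ↥(varIdeal K A ⊓ varIdeal K B ⊔ varIdeal K C) <
      residueGrade n K ↥(varIdeal K A ⊓ varIdeal K B) := by
    refine lt_of_lt_of_le ?_ (add_two_le_residueGrade_varIdeal_inf hB hAB)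
    rw [hsup]
    norm_cast
    omega
  have hlt_C : residueGrade n K ↥(varIdeal K A ⊓ varIdeal K B ⊔ varIdeal K C) <
      residueGrade n K (varIdeal K C) := by
    rw [hsup, residueGrade_varIdeal hC]
    exact_mod_cast Nat.succ_lt_succ (card_compl_union_lt hAC)
  calc residueGrade n K ↥(varIdeal K A ⊓ varIdeal K B ⊓ varIdeal K C)
      = residueGrade n K ↥(varIdeal K A ⊓ varIdeal K B ⊔ varIdeal K C) + 1 :=
        moduleGrade_inf_eq_add_one_of_lt _ _ hlt_inf hlt_C
    _ = (A ∪ C)ᶜ.card + 2 := by rw [hsup, add_assoc, one_add_one_eq_two]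

theorem moduleDepth_maxIdeal_eq_of_residueGrade_eq {I : Ideal (MvPolynomial (Fin n) K)}
    {d : ℕ} (hd : residueGrade n K I = d) :
    moduleDepth (MvPolynomial (Fin n) K) (maxIdeal n K) I = d := by
  have hI : I ≠ ⊥ := by
    rintro rfl
    exact ENat.top_ne_natCast d ((moduleGrade_eq_top_of_subsingleton _ _ _).symm.trans hd)
  obtain ⟨f, hf, hf0⟩ := Submodule.exists_mem_ne_zero_of_ne_bot hI
  have : FaithfulSMul (MvPolynomial (Fin n) K) I :=
    ⟨fun h ↦ mul_right_cancel₀ hf0 (congrArg Subtype.val (h ⟨f, hf⟩))⟩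
  exact moduleDepth_eq_of_moduleGrade_eq
    (ideal_smul_top_ne_top_of_faithfulSMul varIdeal_ne_top I) hd

theorem moduleDepth_varIdeal_inf_inf (hA : A ⊆ B ∪ C) (hAB : ¬A ⊆ B) (hAC : ¬A ⊆ C)
    (hcard : (A ∪ B).card ≤ (A ∪ C).card) :
    moduleDepth (MvPolynomial (Fin n) K) (maxIdeal n K)
      ↥(varIdeal K A ⊓ varIdeal K B ⊓ varIdeal K C) = n + 2 - (A ∪ C).card := by
  rw [moduleDepth_maxIdeal_eq_of_residueGrade_eq
    (by exact_mod_cast residueGrade_varIdeal_inf_inf hA hAB hAC hcard), Finset.card_compl,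
    Fintype.card_fin]
  have := card_finset_fin_le (A ∪ C)
  omega

end VarIdeal

theorem depth_inter_three_primes_degenerate_general {K : Type*} [Field K] {n : ℕ}
    {A1 A2 A3 : Finset (Fin n)} (h12 : ¬varIdeal K A1 ≤ varIdeal K A2)
    (h13 : ¬varIdeal K A1 ≤ varIdeal K A3) (h1 : varIdeal K A1 ≤ varIdeal K A2 ⊔ varIdeal K A3) :
    moduleDepth (MvPolynomial (Fin n) K) (maxIdeal n K)
        ↥(varIdeal K A1 ⊓ varIdeal K A2 ⊓ varIdeal K A3) =
      n + 2 - max (A1 ∪ A2).card (A1 ∪ A3).card := by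
  rw [← varIdeal_union] at h1
  rw [varIdeal_le_varIdeal_iff] at h12 h13 h1
  rcases le_total (A1 ∪ A2).card (A1 ∪ A3).card with hle | hle
  · rw [max_eq_right hle, moduleDepth_varIdeal_inf_inf h1 h12 h13 hle]
  · rw [Finset.union_comm] at h1
    rw [max_eq_left hle, inf_right_comm, moduleDepth_varIdeal_inf_inf h1 h13 h12 hle]

/-- for three pairwise incomparable nonzero monomial primes with
`P₁+P₂+P₃ = (x₁,…,xₙ)` and `P₁ ⊆ P₂+P₃`,
`depth (P₁ ∩ P₂ ∩ P₃) = n + 2 − max{ht(P₁+P₂), ht(P₁+P₃)}`. -/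
theorem depth_inter_three_primes_degenerate {K : Type*} [Field K] (n : ℕ)
    (A1 A2 A3 : Finset (Fin n)) :
    letI P1 : Ideal (MvPolynomial (Fin n) K) := varIdeal K A1
    letI P2 : Ideal (MvPolynomial (Fin n) K) := varIdeal K A2
    letI P3 : Ideal (MvPolynomial (Fin n) K) := varIdeal K A3
    P1 ≠ ⊥ → P2 ≠ ⊥ → P3 ≠ ⊥ →
    ¬P1 ≤ P2 → ¬P2 ≤ P1 → ¬P1 ≤ P3 → ¬P3 ≤ P1 → ¬P2 ≤ P3 → ¬P3 ≤ P2 →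
    P1 ⊔ P2 ⊔ P3 = maxIdeal n K →
    P1 ≤ P2 ⊔ P3 →
    moduleDepth (MvPolynomial (Fin n) K) (maxIdeal n K) ↥(P1 ⊓ P2 ⊓ P3) =
      n + 2 - max ((A1 ∪ A2).card) ((A1 ∪ A3).card) := by
  intro _ _ _ h12 _ h13 _ _ _ _ h1
  exact depth_inter_three_primes_degenerate_general h12 h13 h1
end
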